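/- Let E₁,…,E_n (n ≥ 1) be a nonempty finite collection of enclosures and let 𝔉 be a subsheaf of the product sheaf ∏ᵢ Ẽᵢ on the site Enc. Then 𝔉 is finitely related: for any two enclosures G and G′ and any maps of sheaves G̃ → 𝔉 and G̃′ → 𝔉, the fiber product sheaf G̃ ×_𝔉 G̃′ is finitely generated. -/

import Mathlib

open scoped BigOperators

/-- The standard Cartan plane of type A₂: `{x ∈ ℝ³ : x₁ + x₂ + x₃ = 0}`. -/
abbrev Cartan : Type := {x : Fin 3 → ℝ // ∑ i, x i = 0}

/-- The root half-space `{x : xᵢ − xⱼ ≥ c}`. -/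
def RootHalfSpace (i j : Fin 3) (c : ℝ) : Set Cartan := {x | c ≤ x.1 i - x.1 j}

/-- The root hyperplane `{x : xᵢ − xⱼ = c}`. -/
def RootHyperplane (i j : Fin 3) (c : ℝ) : Set Cartan := {x | x.1 i - x.1 j = c}

/-- An enclosure: a bounded subset of the Cartan plane which is an intersection of
finitely many root half-spaces. -/
def IsEnclosure (E : Set Cartan) : Prop :=
  Bornology.IsBounded E ∧
  ∃ s : Finset (Fin 3 × Fin 3 × ℝ),
    (∀ p ∈ s, p.1 ≠ p.2.1) ∧
    E = ⋂ p ∈ s, RootHalfSpace p.1 p.2.1 p.2.2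

/-- An element of the affine Weyl group: `x ↦ σ·x + v` with `σ ∈ S₃` permuting
coordinates and `v` in the Cartan plane. -/
def IsAffWeyl (g : Cartan → Cartan) : Prop :=
  ∃ (σ : Equiv.Perm (Fin 3)) (v : Cartan),
    ∀ (x : Cartan) (i : Fin 3), (g x).1 i = x.1 (σ i) + v.1 i

theorem isAffWeyl_id : IsAffWeyl (fun x => x) := by
  refine ⟨Equiv.refl _, ⟨fun _ => 0, by simp⟩, ?_⟩
  intro x i
  simp

theorem IsAffWeyl.comp {g₂ g₁ : Cartan → Cartan} (h₂ : IsAffWeyl g₂) (h₁ : IsAffWeyl g₁) :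
    IsAffWeyl (fun x => g₂ (g₁ x)) := by
  obtain ⟨σ₂, v₂, hh₂⟩ := h₂
  obtain ⟨σ₁, v₁, hh₁⟩ := h₁
  refine ⟨σ₂.trans σ₁, ⟨fun i => v₁.1 (σ₂ i) + v₂.1 i, ?_⟩, ?_⟩
  · rw [Finset.sum_add_distrib, Equiv.sum_comp σ₂ v₁.1, v₁.2, v₂.2, add_zero]
  · intro x i
    rw [hh₂, hh₁]
    simp [Equiv.trans_apply]
    ring

open CategoryTheory

/-- The category `Enc` of enclosures. -/
structure Enc : Type where
  /-- the underlying subset of the Cartan plane -/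
  carrier : Set Cartan
  isEnclosure : IsEnclosure carrier

/-- Morphisms of enclosures are restrictions of affine Weyl group elements. -/
instance : Category Enc where
  Hom E F := {f : E.carrier → F.carrier //
    ∃ g : Cartan → Cartan, IsAffWeyl g ∧ ∀ x : E.carrier, (f x : Cartan) = g x}
  id E := ⟨fun x => x, ⟨fun y => y, isAffWeyl_id, fun _ => rfl⟩⟩
  comp {E F G} f g := ⟨fun x => g.1 (f.1 x), by
    obtain ⟨gf, hgf, hf⟩ := f.2
    obtain ⟨gg, hgg, hg⟩ := g.2
    exact ⟨fun x => gg (gf x), hgg.comp hgf, fun x => by rw [hg, hf]⟩⟩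

/-- A sieve on an enclosure `E` contains a covering: a finite family of morphisms
`Eᵢ → E` in `Enc`, belonging to the sieve, whose images cover `E`. -/
def ContainsCovering (E : Enc) (S : CategoryTheory.Sieve E) : Prop :=
  ∃ (n : ℕ) (F : Fin n → Enc) (f : ∀ i, F i ⟶ E),
    (∀ i, S.arrows (f i)) ∧ ∀ x : E.carrier, ∃ (i : Fin n) (y : (F i).carrier), (f i).1 y = x

open CategoryTheory

/-- `Ẽ`: the sheafification of the representable presheaf `Hom_Enc(−, F)`. -/
noncomputable def tilde (J : GrothendieckTopology Enc) (F : Enc) : Sheaf J (Type) :=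
  (presheafToSheaf J (Type)).obj (yoneda.obj F)

/-- A sheaf of sets on the site `Enc` is finitely generated if finitely many maps
from sheafified representables `Ẽᵢ` induce an epimorphism `⨿ᵢ Ẽᵢ → 𝔉`. -/
noncomputable def FinGenerated (J : GrothendieckTopology Enc) (𝔉 : Sheaf J (Type)) : Prop :=
  ∃ (m : ℕ) (E : Fin m → Enc) (φ : ∀ i, tilde J (E i) ⟶ 𝔉),
    Epi (Limits.Sigma.desc φ)

/-- A sheaf `𝔉` on the site `Enc` is finitely related if for any two enclosures
`G`, `G'` and maps `G̃ → 𝔉 ← G̃'`, the fiber product `G̃ ×_𝔉 G̃'` is finitely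
generated. -/
noncomputable def FinRelated (J : GrothendieckTopology Enc) (𝔉 : Sheaf J (Type)) : Prop :=
  ∀ (G G' : Enc) (α : tilde J G ⟶ 𝔉) (α' : tilde J G' ⟶ 𝔉),
    FinGenerated J (Limits.pullback α α')

/-- A construction is a finitely related sheaf of sets on the site `Enc`. -/
noncomputable def IsConstruction (J : GrothendieckTopology Enc) (𝔉 : Sheaf J (Type)) : Prop :=
  FinRelated J 𝔉

/-!
Locally on finite covers of `G` and `G'`, the components `G̃ ⟶ Ẽᵢ` and `G̃' ⟶ Ẽᵢ` of the two
given maps come from morphisms `K ⟶ Eᵢ ⟵ K'` of enclosures. Since `𝔉` embeds in the product and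
the presheaves `Hom(-, Eᵢ)` are separated, two morphisms `V ⟶ K` and `V ⟶ K'` agree in `𝔉` exactly
when their composites to every `Eᵢ` agree. As there is at least one index and `Enc` has pullbacks
and equalizers, the pairs that agree are classified by a single enclosure `H`, and the finitely
many `H` obtained in this way generate `G̃ ×_𝔉 G̃'`.

The geometric input is that Weyl elements are invertible and that the locus where two of them
agree, like the preimage of an enclosure, is a finite intersection of root half-spaces.
-/

open Limits Opposite

universe w v u

section SheafifiedRepresentables

variable {C : Type u} [Category.{v} C] (J : GrothendieckTopology C) [HasSheafify J (Type v)]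

/-- The functor `U ↦ Ũ` sending an object of a site to its sheafified representable presheaf. -/
noncomputable abbrev sheafYoneda : C ⥤ Sheaf J (Type v) := yoneda ⋙ presheafToSheaf J (Type v)

variable {J}

/-- The Yoneda lemma for sheaves: maps `Ũ ⟶ Z` are the sections of `Z` over `U`. -/
noncomputable def sheafYonedaEquiv {U : C} {Z : Sheaf J (Type v)} :
    ((sheafYoneda J).obj U ⟶ Z) ≃ Z.obj.obj (op U) :=
  ((sheafificationAdjunction J (Type v)).homEquiv (yoneda.obj U) Z).trans yonedaEquiv

lemma sheafYonedaEquiv_comp {U : C} {Z Z' : Sheaf J (Type v)}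
    (s : (sheafYoneda J).obj U ⟶ Z) (u : Z ⟶ Z') :
    sheafYonedaEquiv (s ≫ u) = u.hom.app (op U) (sheafYonedaEquiv s) := by
  simp only [sheafYonedaEquiv, Equiv.trans_apply, Adjunction.homEquiv_naturality_right,
    yonedaEquiv_comp]
  rfl

lemma sheafYonedaEquiv_map_comp {U V : C} {Z : Sheaf J (Type v)}
    (f : V ⟶ U) (s : (sheafYoneda J).obj U ⟶ Z) :
    sheafYonedaEquiv ((sheafYoneda J).map f ≫ s) = Z.obj.map f.op (sheafYonedaEquiv s) := by
  simp only [sheafYonedaEquiv, Equiv.trans_apply, Functor.comp_map,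
    Adjunction.homEquiv_naturality_left, yonedaEquiv_naturality]

lemma sheafYonedaEquiv_map {U V : C} (f : V ⟶ U) :
    sheafYonedaEquiv ((sheafYoneda J).map f) = (toSheafify J (yoneda.obj U)).app (op V) f := by
  have h := NatTrans.naturality_apply (toSheafify J (yoneda.obj U)) f.op (𝟙 U)
  rw [← Category.comp_id ((sheafYoneda J).map f), sheafYonedaEquiv_map_comp]
  simp only [sheafYonedaEquiv, Equiv.trans_apply, yonedaEquiv_apply]
  refine Eq.trans h.symm ?_
  simp

lemma sheafYoneda_faithful [J.WEqualsLocallyBijective (Type v)]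
    (hJ : ∀ U : C, Presieve.IsSeparated J (yoneda.obj U)) :
    (sheafYoneda J).Faithful where
  map_injective {V U} f g h := by
    have hfg : (toSheafify J (yoneda.obj U)).app (op V) f
        = (toSheafify J (yoneda.obj U)).app (op V) g := by
      rw [← sheafYonedaEquiv_map, ← sheafYonedaEquiv_map, h]
    have hmem := Presheaf.equalizerSieve_mem J (toSheafify J (yoneda.obj U)) (X := op V) f g hfg
    exact (hJ U _ hmem).ext fun _ _ hk => hk

/-- The sieve of those `f : V ⟶ U` along which `a : Ũ ⟶ G̃` restricts to (the image of) an
actual morphism `V ⟶ G` belonging to the sieve `R`. -/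
def liftSieve {U G : C} (a : (sheafYoneda J).obj U ⟶ (sheafYoneda J).obj G) (R : Sieve G) :
    Sieve U where
  arrows V f := ∃ g : V ⟶ G, R g ∧ (sheafYoneda J).map f ≫ a = (sheafYoneda J).map g
  downward_closed := by
    rintro V W f ⟨g, hg, hfg⟩ h
    exact ⟨h ≫ g, R.downward_closed hg h, by
      rw [Functor.map_comp_assoc, hfg, Functor.map_comp]⟩

lemma liftSieve_mem [J.WEqualsLocallyBijective (Type v)] {U G : C}
    (a : (sheafYoneda J).obj U ⟶ (sheafYoneda J).obj G) {R : Sieve G} (hR : R ∈ J G) :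
    liftSieve a R ∈ J U := by
  refine J.transitive
    (Presheaf.imageSieve_mem J (toSheafify J (yoneda.obj G)) (sheafYonedaEquiv a)) _ ?_
  rintro V f ⟨g, hg⟩
  have hfg : (sheafYoneda J).map f ≫ a = (sheafYoneda J).map g := by
    apply sheafYonedaEquiv.injective
    rw [sheafYonedaEquiv_map_comp, sheafYonedaEquiv_map]
    exact hg.symm
  refine J.superset_covering ?_ (J.pullback_stable g hR)
  intro W h hh
  exact ⟨h ≫ g, hh, by rw [Functor.map_comp_assoc, hfg, Functor.map_comp]⟩

instance hasCoproductsOfShape_sheaf {I : Type w} [Finite I] :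
    HasCoproductsOfShape I (Sheaf J (Type v)) :=
  hasColimitsOfShape_discrete _ _

/-- The family `φ i : Ẽᵢ ⟶ Z` is jointly locally surjective: every section of `Z`, viewed as a
map `Ũ ⟶ Z`, factors through some `φ i` on each member of a covering sieve of `U`. -/
def JointlyLocallySurjective {I : Type w} {E : I → C} {Z : Sheaf J (Type v)}
    (φ : ∀ i, (sheafYoneda J).obj (E i) ⟶ Z) : Prop :=
  ∀ (U : C) (s : (sheafYoneda J).obj U ⟶ Z), ∃ S ∈ J U, ∀ ⦃V : C⦄ (f : V ⟶ U), S f →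
    ∃ (i : I) (g : V ⟶ E i), (sheafYoneda J).map f ≫ s = (sheafYoneda J).map g ≫ φ i

lemma JointlyLocallySurjective.epi_sigmaDesc {I : Type w}
    [HasCoproductsOfShape I (Sheaf J (Type v))] {E : I → C} {Z : Sheaf J (Type v)}
    {φ : ∀ i, (sheafYoneda J).obj (E i) ⟶ Z} (hφ : JointlyLocallySurjective φ) :
    Epi (Limits.Sigma.desc φ) := by
  have : Sheaf.IsLocallySurjective (Limits.Sigma.desc φ) := by
    refine ⟨fun {U} x => ?_⟩
    obtain ⟨s, rfl⟩ := sheafYonedaEquiv.surjective x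
    obtain ⟨S, hS, hfac⟩ := hφ _ s
    refine J.superset_covering (fun V f hf => ?_) hS
    obtain ⟨i, g, hg⟩ := hfac f hf
    let t := (sheafYoneda J).map g ≫ Sigma.ι (fun i => (sheafYoneda J).obj (E i)) i
    refine ⟨sheafYonedaEquiv t, (sheafYonedaEquiv_comp t _).symm.trans ?_⟩
    rw [Category.assoc, Sigma.ι_desc, ← hg]
    exact sheafYonedaEquiv_map_comp f s
  infer_instance

lemma JointlyLocallySurjective.exists_fin_epi_sigmaDesc {I : Type w} [Finite I]
    {E : I → C} {Z : Sheaf J (Type v)} {φ : ∀ i, (sheafYoneda J).obj (E i) ⟶ Z}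
    (hφ : JointlyLocallySurjective φ) :
    ∃ (m : ℕ) (E' : Fin m → C) (ψ : ∀ k, (sheafYoneda J).obj (E' k) ⟶ Z),
      Epi (Limits.Sigma.desc ψ) := by
  let e := (Finite.equivFin I).symm
  have hφe : JointlyLocallySurjective fun k => φ (e k) := by
    intro U s
    obtain ⟨S, hS, hfac⟩ := hφ U s
    exact ⟨S, hS, fun V f hf => e.surjective.exists.1 (hfac f hf)⟩
  exact ⟨_, _, _, hφe.epi_sigmaDesc⟩

end SheafifiedRepresentables

section FiniteRelations

variable {C : Type u} [Category.{v} C]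

lemma exists_joint_pullback [HasPullbacks C] [HasEqualizers C] {I : Type w} [Finite I] [Nonempty I]
    {E : I → C} {K K' : C} (a : ∀ i, K ⟶ E i) (a' : ∀ i, K' ⟶ E i) :
    ∃ (H : C) (p : H ⟶ K) (p' : H ⟶ K'), ∀ ⦃V : C⦄ (q : V ⟶ K) (q' : V ⟶ K'),
      (∀ i, q ≫ a i = q' ≫ a' i) ↔ ∃ h : V ⟶ H, h ≫ p = q ∧ h ≫ p' = q' := by
  have := Fintype.ofFinite I
  let i₀ : I := Classical.arbitrary I
  let fst := pullback.fst (a i₀) (a' i₀)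
  let snd := pullback.snd (a i₀) (a' i₀)
  let H := Finset.univ.inf fun i => equalizerSubobject (fst ≫ a i) (snd ≫ a' i)
  have factors_iff {V : C} (r : V ⟶ pullback (a i₀) (a' i₀)) :
      H.Factors r ↔ ∀ i, (r ≫ fst) ≫ a i = (r ≫ snd) ≫ a' i := by
    simp only [H, Subobject.finset_inf_factors, equalizerSubobject_factors_iff, Finset.mem_univ,
      true_implies, Category.assoc]
  refine ⟨H, H.arrow ≫ fst, H.arrow ≫ snd, fun V q q' => ⟨fun hq => ?_, ?_⟩⟩
  · let r := pullback.lift q q' (hq i₀)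
    have hfst : r ≫ fst = q := pullback.lift_fst ..
    have hsnd : r ≫ snd = q' := pullback.lift_snd ..
    have hr : H.Factors r := (factors_iff r).2 (by rwa [hfst, hsnd])
    exact ⟨H.factorThru r hr, by simpa using hfst, by simpa using hsnd⟩
  · rintro ⟨h, rfl, rfl⟩
    simpa only [Category.assoc] using (factors_iff (h ≫ H.arrow)).1 (H.factors_comp_arrow h)

/-- Every covering sieve contains a finite family of morphisms which is itself covering. -/
def IsFinitaryTopology (J : GrothendieckTopology C) : Prop :=
  ∀ ⦃U : C⦄ (S : Sieve U), S ∈ J U →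
    ∃ (m : ℕ) (F : Fin m → C) (f : ∀ k, F k ⟶ U), (∀ k, S (f k)) ∧ Sieve.ofArrows F f ∈ J U

variable {J : GrothendieckTopology C} [HasSheafify J (Type v)]

/-- The maps `β : K̃ ⟶ 𝔉` and `β' : K̃' ⟶ 𝔉` have a representable weak pullback if some
`K ⟵ H ⟶ K'` in `C` is weakly universal among the spans in `C` that become equal in `𝔉`. -/
def HasRepresentableWeakPullback {𝔉 : Sheaf J (Type v)} {K K' : C}
    (β : (sheafYoneda J).obj K ⟶ 𝔉) (β' : (sheafYoneda J).obj K' ⟶ 𝔉) : Prop :=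
  ∃ (H : C) (p : H ⟶ K) (p' : H ⟶ K'), ∀ ⦃V : C⦄ (q : V ⟶ K) (q' : V ⟶ K'),
    (sheafYoneda J).map q ≫ β = (sheafYoneda J).map q' ≫ β' ↔
      ∃ h : V ⟶ H, h ≫ p = q ∧ h ≫ p' = q'

lemma hasRepresentableWeakPullback_of_mono_pi [HasPullbacks C] [HasEqualizers C]
    [(sheafYoneda J).Faithful] {I : Type w} [Finite I] [Nonempty I] {E : I → C}
    {𝔉 : Sheaf J (Type v)} (ι : 𝔉 ⟶ ∏ᶜ fun i => (sheafYoneda J).obj (E i)) [Mono ι] {K K' : C}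
    {β : (sheafYoneda J).obj K ⟶ 𝔉} {β' : (sheafYoneda J).obj K' ⟶ 𝔉}
    {a : ∀ i, K ⟶ E i} (ha : ∀ i, β ≫ ι ≫ Pi.π _ i = (sheafYoneda J).map (a i))
    {a' : ∀ i, K' ⟶ E i} (ha' : ∀ i, β' ≫ ι ≫ Pi.π _ i = (sheafYoneda J).map (a' i)) :
    HasRepresentableWeakPullback β β' := by
  obtain ⟨H, p, p', hH⟩ := exists_joint_pullback a a'
  refine ⟨H, p, p', fun V q q' => Iff.trans ?_ (hH q q')⟩
  rw [← cancel_mono ι]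
  refine ⟨fun h i => (sheafYoneda J).map_injective ?_, fun h => Pi.hom_ext _ _ fun i => ?_⟩
  · simpa only [Functor.map_comp, Category.assoc, ha, ha'] using h =≫ Pi.π _ i
  · simp only [Category.assoc, ha, ha', ← Functor.map_comp, h i]

lemma exists_finite_cover_lifting [J.WEqualsLocallyBijective (Type v)] (hJ : IsFinitaryTopology J)
    {I : Type w} [Finite I] {E : I → C} {G : C}
    (α : ∀ i, (sheafYoneda J).obj G ⟶ (sheafYoneda J).obj (E i)) :
    ∃ (m : ℕ) (F : Fin m → C) (f : ∀ k, F k ⟶ G) (a : ∀ k i, F k ⟶ E i),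
      Sieve.ofArrows F f ∈ J G ∧
      ∀ k i, (sheafYoneda J).map (f k) ≫ α i = (sheafYoneda J).map (a k i) := by
  have := Fintype.ofFinite I
  have hinf : (Finset.univ.inf fun i => liftSieve (α i) ⊤) ∈ J G :=
    Finset.inf_induction (p := (· ∈ J G)) (J.top_mem G)
      (fun _ h _ h' => J.intersection_covering h h')
      fun i _ => liftSieve_mem (α i) (J.top_mem _)
  obtain ⟨m, F, f, hf, hcov⟩ := hJ _ hinf
  have hlift k i : liftSieve (α i) ⊤ (f k) :=
    Finset.inf_le (f := fun i => liftSieve (α i) ⊤) (Finset.mem_univ i) _ (hf k)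
  choose a ha using hlift
  exact ⟨m, F, f, a, hcov, fun k i => (ha k i).2⟩

lemma exists_fin_epi_pullback_of_cover [J.WEqualsLocallyBijective (Type v)]
    {𝔉 : Sheaf J (Type v)} {G G' : C}
    (α : (sheafYoneda J).obj G ⟶ 𝔉) (α' : (sheafYoneda J).obj G' ⟶ 𝔉)
    {A A' : Type w} [Finite A] [Finite A'] {F : A → C} {f : ∀ k, F k ⟶ G}
    (hf : Sieve.ofArrows F f ∈ J G) {F' : A' → C} {f' : ∀ l, F' l ⟶ G'}
    (hf' : Sieve.ofArrows F' f' ∈ J G')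
    (hweak : ∀ k l, HasRepresentableWeakPullback
      ((sheafYoneda J).map (f k) ≫ α) ((sheafYoneda J).map (f' l) ≫ α')) :
    ∃ (m : ℕ) (H : Fin m → C) (φ : ∀ i, (sheafYoneda J).obj (H i) ⟶ pullback α α'),
      Epi (Limits.Sigma.desc φ) := by
  choose H p p' hH using hweak
  have hcomm k l : (sheafYoneda J).map (p k l ≫ f k) ≫ α
      = (sheafYoneda J).map (p' k l ≫ f' l) ≫ α' := by
    simpa only [Functor.map_comp, Category.assoc] using (hH k l _ _).2 ⟨𝟙 _, by simp⟩
  suffices h : JointlyLocallySurjective fun kl : A × A' => pullback.lift _ _ (hcomm kl.1 kl.2) from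
    h.exists_fin_epi_sigmaDesc
  intro U s
  refine ⟨_, J.intersection_covering (liftSieve_mem (s ≫ pullback.fst α α') hf)
    (liftSieve_mem (s ≫ pullback.snd α α') hf'), ?_⟩
  rintro V t ⟨⟨g, hg, htg⟩, ⟨g', hg', htg'⟩⟩
  obtain ⟨k, q, rfl⟩ := (Sieve.mem_ofArrows_iff ..).1 hg
  obtain ⟨l, q', rfl⟩ := (Sieve.mem_ofArrows_iff ..).1 hg'
  have hq : (sheafYoneda J).map q ≫ (sheafYoneda J).map (f k) ≫ α
      = (sheafYoneda J).map q' ≫ (sheafYoneda J).map (f' l) ≫ α' := by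
    rw [← Functor.map_comp_assoc, ← Functor.map_comp_assoc, ← htg, ← htg']
    simp only [Category.assoc, pullback.condition]
  obtain ⟨h, rfl, rfl⟩ := (hH k l q q').1 hq
  refine ⟨(k, l), h, pullback.hom_ext ?_ ?_⟩
  · simp only [Category.assoc, htg, pullback.lift_fst, Functor.map_comp]
  · simp only [Category.assoc, htg', pullback.lift_snd, Functor.map_comp]

theorem subsheaf_of_product_finRelated_general [J.WEqualsLocallyBijective (Type v)]
    (hJ : IsFinitaryTopology J) (hsep : ∀ U : C, Presieve.IsSeparated J (yoneda.obj U))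
    [HasPullbacks C] [HasEqualizers C] {I : Type w} [Finite I] [Nonempty I] (E : I → C)
    (𝔉 : Sheaf J (Type v)) (ι : 𝔉 ⟶ ∏ᶜ fun i => (sheafYoneda J).obj (E i)) [hι : Mono ι]
    (G G' : C) (α : (sheafYoneda J).obj G ⟶ 𝔉) (α' : (sheafYoneda J).obj G' ⟶ 𝔉) :
    ∃ (m : ℕ) (H : Fin m → C) (φ : ∀ i, (sheafYoneda J).obj (H i) ⟶ pullback α α'),
      Epi (Limits.Sigma.desc φ) := by
  have := sheafYoneda_faithful hsep
  obtain ⟨m, F, f, a, hf, ha⟩ := exists_finite_cover_lifting hJ fun i => α ≫ ι ≫ Pi.π _ i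
  obtain ⟨m', F', f', a', hf', ha'⟩ := exists_finite_cover_lifting hJ fun i => α' ≫ ι ≫ Pi.π _ i
  refine exists_fin_epi_pullback_of_cover α α' hf hf' fun k l => ?_
  exact hasRepresentableWeakPullback_of_mono_pi ι (a := a k) (a' := a' l)
    (fun i => by rw [Category.assoc, ha]) (fun i => by rw [Category.assoc, ha'])

end FiniteRelations

/-- A finite intersection of root half-spaces: an enclosure without the boundedness condition. -/
def IsRootPolyhedron (E : Set Cartan) : Prop :=
  ∃ s : Finset (Fin 3 × Fin 3 × ℝ), (∀ p ∈ s, p.1 ≠ p.2.1) ∧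
    E = ⋂ p ∈ s, RootHalfSpace p.1 p.2.1 p.2.2

namespace IsRootPolyhedron

lemma univ : IsRootPolyhedron Set.univ := ⟨∅, by simp, by simp⟩

lemma inter {A B : Set Cartan} (hA : IsRootPolyhedron A) (hB : IsRootPolyhedron B) :
    IsRootPolyhedron (A ∩ B) := by
  classical
  obtain ⟨s, hs, rfl⟩ := hA
  obtain ⟨t, ht, rfl⟩ := hB
  refine ⟨s ∪ t, fun p hp => (Finset.mem_union.1 hp).elim (hs p) (ht p), Finset.iInf_union.symm⟩

lemma biInter {I : Type*} {s : Finset I} {A : I → Set Cartan}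
    (hA : ∀ i ∈ s, IsRootPolyhedron (A i)) : IsRootPolyhedron (⋂ i ∈ s, A i) := by
  rw [← Finset.inf_set_eq_iInter]
  exact Finset.inf_induction univ (fun _ h _ h' => h.inter h') hA

lemma empty : IsRootPolyhedron ∅ := by
  refine ⟨{(0, 1, 1), (1, 0, 1)}, by simp, Eq.symm (Set.eq_empty_of_forall_notMem fun x hx => ?_)⟩
  simp only [RootHalfSpace, Finset.mem_insert, Finset.mem_singleton, Set.iInter_iInter_eq_or_left,
    Set.iInter_iInter_eq_left, Set.mem_inter_iff, Set.mem_ofPred_eq] at hx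
  linarith

lemma rootHalfSpace (i j : Fin 3) (c : ℝ) : IsRootPolyhedron (RootHalfSpace i j c) := by
  rcases ne_or_eq i j with hij | rfl
  · exact ⟨{(i, j, c)}, by simpa using hij, by simp⟩
  · by_cases hc : c ≤ 0
    · simpa [RootHalfSpace, hc] using univ
    · simpa [RootHalfSpace, hc] using empty

lemma preimage {A : Set Cartan} (hA : IsRootPolyhedron A) {g : Cartan → Cartan}
    (hg : IsAffWeyl g) : IsRootPolyhedron (g ⁻¹' A) := by
  obtain ⟨s, -, rfl⟩ := hA
  obtain ⟨σ, v, hg⟩ := hg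
  have preimage_halfSpace (i j : Fin 3) (c : ℝ) :
      g ⁻¹' RootHalfSpace i j c = RootHalfSpace (σ i) (σ j) (c - v.1 i + v.1 j) := by
    ext x
    simp only [RootHalfSpace, Set.mem_preimage, Set.mem_ofPred_eq, hg]
    constructor <;> intro h <;> linarith
  simp only [Set.preimage_iInter, preimage_halfSpace]
  exact biInter fun p _ => rootHalfSpace _ _ _

lemma setOf_eq {g h : Cartan → Cartan} (hg : IsAffWeyl g) (hh : IsAffWeyl h) :
    IsRootPolyhedron {x | g x = h x} := by
  obtain ⟨σ, v, hg⟩ := hg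
  obtain ⟨τ, w, hh⟩ := hh
  have setOf_eq_biInter : {x | g x = h x} = ⋂ i ∈ Finset.univ,
      RootHalfSpace (σ i) (τ i) (w.1 i - v.1 i) ∩ RootHalfSpace (τ i) (σ i) (v.1 i - w.1 i) := by
    ext x
    simp only [RootHalfSpace, Set.mem_ofPred_eq, Subtype.ext_iff, funext_iff, hg, hh,
      Finset.mem_univ, Set.iInter_true, Set.mem_iInter, Set.mem_inter_iff]
    refine forall_congr' fun i => ⟨fun e => ⟨by linarith, by linarith⟩, fun ⟨_, _⟩ => by linarith⟩
  rw [setOf_eq_biInter]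
  exact biInter fun i _ => (rootHalfSpace _ _ _).inter (rootHalfSpace _ _ _)

end IsRootPolyhedron

lemma IsAffWeyl.exists_inverse {g : Cartan → Cartan} (hg : IsAffWeyl g) :
    ∃ h, IsAffWeyl h ∧ Function.LeftInverse h g ∧ Function.RightInverse h g := by
  obtain ⟨σ, v, hg⟩ := hg
  have sum_symm (x : Cartan) : ∑ i, x.1 (σ.symm i) = 0 := by rw [Equiv.sum_comp, x.2]
  refine ⟨fun x => ⟨fun i => x.1 (σ.symm i) - v.1 (σ.symm i), ?_⟩,
    ⟨σ.symm, ⟨fun i => -v.1 (σ.symm i), ?_⟩, fun x i => sub_eq_add_neg _ _⟩, fun x => ?_,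
    fun x => ?_⟩
  · rw [Finset.sum_sub_distrib, sum_symm, sum_symm, sub_zero]
  · rw [Finset.sum_neg_distrib, sum_symm, neg_zero]
  all_goals
    ext i
    simp [hg]

namespace Enc

lemma hom_ext {E F : Enc} {f g : E ⟶ F} (h : ∀ x, (f.1 x : Cartan) = g.1 x) : f = g :=
  Subtype.ext <| funext fun x => Subtype.ext (h x)

lemma congr_hom {E F : Enc} {f g : E ⟶ F} (h : f = g) (x : E.carrier) :
    (f.1 x : Cartan) = g.1 x := by
  rw [h]

/-- The enclosure cut out of `E` by a finite intersection `P` of root half-spaces. -/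
def restrict (E : Enc) {P : Set Cartan} (hP : IsRootPolyhedron P) : Enc where
  carrier := E.carrier ∩ P
  isEnclosure :=
    ⟨E.isEnclosure.1.subset Set.inter_subset_left, IsRootPolyhedron.inter E.isEnclosure.2 hP⟩

/-- The inclusion of the enclosure `E ∩ P` into `E`. -/
def restrictι (E : Enc) {P : Set Cartan} (hP : IsRootPolyhedron P) : E.restrict hP ⟶ E :=
  ⟨fun x => ⟨x.1, x.2.1⟩, fun x => x, isAffWeyl_id, fun _ => rfl⟩

/-- The factorization through `E ∩ P` of a morphism to `E` with values in `P`. -/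
def restrictLift {E V : Enc} {P : Set Cartan} (hP : IsRootPolyhedron P) (f : V ⟶ E)
    (hf : ∀ x, (f.1 x : Cartan) ∈ P) : V ⟶ E.restrict hP :=
  ⟨fun x => ⟨f.1 x, (f.1 x).2, hf x⟩, f.2⟩

/-- The restriction to `E` of an element of `W_aff` that maps `E` into `F`. -/
def homOfAffWeyl {E F : Enc} {g : Cartan → Cartan} (hg : IsAffWeyl g)
    (hEF : ∀ x ∈ E.carrier, g x ∈ F.carrier) : E ⟶ F :=
  ⟨fun x => ⟨g x, hEF x x.2⟩, g, hg, fun _ => rfl⟩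

instance : HasEqualizers Enc := by
  have {E F : Enc} (f g : E ⟶ F) : HasLimit (parallelPair f g) := by
    obtain ⟨a, ha, hfa⟩ := f.2
    obtain ⟨b, hb, hgb⟩ := g.2
    have hP := IsRootPolyhedron.setOf_eq ha hb
    have hι : E.restrictι hP ≫ f = E.restrictι hP ≫ g :=
      hom_ext fun x => (hfa _).trans (x.2.2.trans (hgb (E.restrictι hP |>.1 x)).symm)
    refine ⟨⟨⟨Fork.ofι _ hι, Fork.IsLimit.mk _ (fun s => restrictLift hP s.ι fun x => ?_) ?_ ?_⟩⟩⟩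
    · rw [Set.mem_ofPred_eq, ← hfa, ← hgb]
      exact congr_hom s.condition x
    · exact fun s => rfl
    · exact fun s m hm => hom_ext fun x => congr_hom hm x
  exact hasEqualizers_of_hasLimit_parallelPair _

instance : HasPullbacks Enc := by
  have {E F G : Enc} (f : E ⟶ G) (g : F ⟶ G) : HasLimit (cospan f g) := by
    obtain ⟨a, ha, hfa⟩ := f.2
    obtain ⟨b, hb, hgb⟩ := g.2
    obtain ⟨c, hc, hcb, hbc⟩ := hb.exists_inverse
    have hca := hc.comp ha
    have hP : IsRootPolyhedron ((fun x => c (a x)) ⁻¹' F.carrier) :=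
      IsRootPolyhedron.preimage F.isEnclosure.2 hca
    let snd : E.restrict hP ⟶ F := homOfAffWeyl hca fun x hx => hx.2
    have hsnd : E.restrictι hP ≫ f = snd ≫ g :=
      hom_ext fun x => (hfa _).trans ((hbc _).symm.trans (hgb (snd.1 x)).symm)
    have hlift (s : PullbackCone f g) (x : s.pt.carrier) : c (a (s.fst.1 x)) = s.snd.1 x := by
      have : a (s.fst.1 x) = b (s.snd.1 x) := by
        rw [← hfa, ← hgb]
        exact congr_hom s.condition x
      rw [this, hcb]
    refine ⟨⟨⟨_, PullbackCone.IsLimit.mk hsnd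
      (fun s => restrictLift hP s.fst fun x => ?_) ?_ ?_ ?_⟩⟩⟩
    · rw [Set.mem_preimage, hlift]
      exact (s.snd.1 x).2
    · exact fun s => rfl
    · exact fun s => hom_ext fun x => hlift s x
    · exact fun s m hm _ => hom_ext fun x => congr_hom hm x
  exact hasPullbacks_of_hasLimit_cospan _

variable {J : GrothendieckTopology Enc}

lemma isFinitaryTopology
    (hJ : ∀ (E : Enc) (S : Sieve E), S ∈ J.sieves E ↔ ContainsCovering E S) :
    IsFinitaryTopology J := by
  intro E S hS
  obtain ⟨m, F, f, hf, hcov⟩ := (hJ E S).1 hS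
  exact ⟨m, F, f, hf, (hJ E _).2 ⟨m, F, f, Sieve.ofArrows_mk F f, hcov⟩⟩

lemma isSeparated_yoneda
    (hJ : ∀ (E : Enc) (S : Sieve E), S ∈ J.sieves E → ContainsCovering E S) (F : Enc) :
    Presieve.IsSeparated J (yoneda.obj F) := by
  intro E S hS s f g hf hg
  obtain ⟨m, D, d, hd, hcov⟩ := hJ E S hS
  refine hom_ext fun x => ?_
  obtain ⟨k, y, rfl⟩ := hcov x
  exact congr_hom ((hf (d k) (hd k)).trans (hg (d k) (hd k)).symm) y

end Enc

/-- Any subsheaf `𝔉` of a finite nonempty product of sheafified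
representables `∏ᵢ Ẽᵢ` on the site `Enc` is finitely related. -/
theorem subsheaf_of_product_finRelated (J : GrothendieckTopology Enc)
    (hJ : ∀ (E : Enc) (S : Sieve E), S ∈ J.sieves E ↔ ContainsCovering E S)
    (n : ℕ) (hn : 1 ≤ n) (Es : Fin n → Enc)
    (𝔉 : Sheaf J (Type)) (ι : 𝔉 ⟶ ∏ᶜ fun i => tilde J (Es i)) (hι : Mono ι) :
    FinRelated J 𝔉 := by
  have : Nonempty (Fin n) := Fin.pos_iff_nonempty.1 hn
  exact subsheaf_of_product_finRelated_general (Enc.isFinitaryTopology hJ)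
    (Enc.isSeparated_yoneda fun E S => (hJ E S).1) Es 𝔉 ι (hι := hι)
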